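/- arXiv:1903.09869 — 2 statements merged into one kernel-verified Lean document; each statement's English description precedes it below -/
import Mathlib

section
/- Let (X, ‖·‖) be a normed vector space and φ : X → X a contraction with fixed point x* ∈ X and Lipschitz constant λ < 1. Let (y_t)_{t∈ℕ}, (d_t)_{t∈ℕ} be sequences in X satisfying y_{t+1} = φ(y_t) + d_t for all t, with bounded disturbances. If ‖d_t‖ converges to 0 with increasing permanence, then y_t converges to x* with increasing permanence (i.e. ‖y_t − x*‖ ⇝ 0). -/
/-- Convergence with increasing permanence (i.p.) in a (pseudo)metric space. -/
def ConvIP {S : Type*} [PseudoMetricSpace S] (s : ℕ → S) (s' : S) : Prop :=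
  ∀ ε > 0, ∀ D N : ℕ, ∃ n, N ≤ n ∧ ∀ i, 1 ≤ i → i ≤ D → dist s' (s (n + i)) ≤ ε

/-!
The distance `u t` of the orbit to the fixed point satisfies `u (t + 1) ≤ lam * u t + δ t`, where
`δ t` is the size of the disturbance. Since `δ` is bounded, so is `u`, say by `M`. Along a run of
`D + K` times at which `δ ≤ (1 - lam) * (ε / 2)`, the recursion contracts towards `ε / 2`, so after
the first `K` of them `u ≤ lam ^ K * M + ε / 2`. Because `M` does not depend on where the run is,
`K` can be fixed beforehand so that this is at most `ε`, and the remaining `D` times form the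
required run for `u`.
-/

section AffineRecursion

variable {u : ℕ → ℝ} {lam r : ℝ} {n : ℕ}

theorem sub_le_pow_mul_sub_of_affine_le (hlam : 0 ≤ lam)
    (hu : ∀ k < n, u (k + 1) ≤ lam * u k + (1 - lam) * r) :
    u n - r ≤ lam ^ n * (u 0 - r) :=
  le_geom (u := fun k => u k - r) hlam n fun k hk => by linarith [hu k hk]

theorem le_max_of_affine_le (hlam0 : 0 ≤ lam) (hlam1 : lam ≤ 1)
    (hu : ∀ k < n, u (k + 1) ≤ lam * u k + (1 - lam) * r) :
    u n ≤ max (u 0) r := by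
  have hpow : 0 ≤ 1 - lam ^ n := sub_nonneg.2 (pow_le_one₀ hlam0 hlam1)
  calc u n ≤ lam ^ n * u 0 + (1 - lam ^ n) * r := by
        linarith [sub_le_pow_mul_sub_of_affine_le hlam0 hu]
    _ ≤ lam ^ n * max (u 0) r + (1 - lam ^ n) * max (u 0) r := by
        gcongr
        exacts [le_max_left _ _, le_max_right _ _]
    _ = max (u 0) r := by ring

end AffineRecursion

section PseudoMetricSpace

variable {S : Type*} [PseudoMetricSpace S] {s : ℕ → S} {s' : S}

theorem convIP_iff_forall_lt :
    ConvIP s s' ↔ ∀ ε > 0, ∀ D N : ℕ, ∃ n ≥ N, ∀ i < D, dist (s (n + i)) s' ≤ ε := by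
  constructor
  · intro h ε hε D N
    obtain ⟨n, hNn, hn⟩ := h ε hε D N
    refine ⟨n + 1, by lia, fun i hi => ?_⟩
    rw [dist_comm, add_assoc, add_comm 1 i]
    exact hn (i + 1) (by lia) hi
  · intro h ε hε D N
    obtain ⟨n, hNn, hn⟩ := h ε hε (D + 1) N
    refine ⟨n, hNn, fun i _ hiD => ?_⟩
    rw [dist_comm]
    exact hn i (by lia)

theorem convIP_iff_dist_convIP_zero :
    ConvIP s s' ↔ ConvIP (fun t => dist (s t) s') 0 := by
  simp only [convIP_iff_forall_lt, Real.dist_0_eq_abs, abs_dist]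

end PseudoMetricSpace

theorem ConvIP.of_le_mul_add {u δ : ℕ → ℝ} {lam b : ℝ} (hδ : ConvIP δ 0) (hb : ∀ t, δ t ≤ b)
    (hlam0 : 0 ≤ lam) (hlam1 : lam < 1) (hu0 : ∀ t, 0 ≤ u t)
    (hu : ∀ t, u (t + 1) ≤ lam * u t + δ t) : ConvIP u 0 := by
  rw [convIP_iff_forall_lt] at hδ ⊢
  intro ε hε D N
  have hgap : 0 < 1 - lam := sub_pos.2 hlam1
  obtain ⟨M, hM⟩ : ∃ M, ∀ t, u t ≤ M :=
    ⟨max (u 0) (b / (1 - lam)), fun t => le_max_of_affine_le hlam0 hlam1.le fun k _ => by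
      rw [mul_div_cancel₀ b hgap.ne']
      linarith [hu k, hb k]⟩
  have hM0 : 0 ≤ M := (hu0 0).trans (hM 0)
  obtain ⟨K, hK⟩ : ∃ K : ℕ, lam ^ K * M < ε / 2 := by
    have hlim := (tendsto_pow_atTop_nhds_zero_of_lt_one hlam0 hlam1).mul_const M
    rw [zero_mul] at hlim
    exact (hlim.eventually_lt_const (half_pos hε)).exists
  obtain ⟨n, hNn, hn⟩ := hδ ((1 - lam) * (ε / 2)) (by positivity) (K + D) N
  refine ⟨n + K, by lia, fun i hi => ?_⟩
  have hrun : u (n + (K + i)) - ε / 2 ≤ lam ^ (K + i) * (u n - ε / 2) :=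
    sub_le_pow_mul_sub_of_affine_le (u := fun k => u (n + k)) hlam0 fun k hk => by
      have hδk := hn k (by lia)
      rw [Real.dist_0_eq_abs] at hδk
      exact (hu (n + k)).trans (by linarith [le_abs_self (δ (n + k))])
  have hdecay : lam ^ (K + i) * (u n - ε / 2) ≤ lam ^ K * M :=
    calc lam ^ (K + i) * (u n - ε / 2) ≤ lam ^ (K + i) * M := by
          gcongr
          linarith [hM n]
      _ ≤ lam ^ K * M := by
          gcongr ?_ * M
          exact pow_le_pow_of_le_one hlam0 hlam1.le (Nat.le_add_right K i)
  rw [Real.dist_0_eq_abs, abs_of_nonneg (hu0 _), add_assoc]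
  linarith

theorem contraction_vanishing_disturbance_convIP_general {X : Type*} [PseudoMetricSpace X]
    {φ : X → X} {lam : ℝ} (hlam0 : 0 ≤ lam) (hlam1 : lam < 1) {xstar : X}
    (hφ : ∀ a, dist (φ a) xstar ≤ lam * dist a xstar) {y : ℕ → X} {b : ℝ}
    (hb : ∀ t, dist (y (t + 1)) (φ (y t)) ≤ b)
    (hd : ConvIP (fun t => dist (y (t + 1)) (φ (y t))) 0) :
    ConvIP y xstar :=
  convIP_iff_dist_convIP_zero.2 <| hd.of_le_mul_add hb hlam0 hlam1 (fun _ => dist_nonneg) fun t =>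
    calc dist (y (t + 1)) xstar ≤ dist (y (t + 1)) (φ (y t)) + dist (φ (y t)) xstar :=
          dist_triangle _ _ _
      _ ≤ lam * dist (y t) xstar + dist (y (t + 1)) (φ (y t)) := by linarith [hφ (y t)]

/-- Disturbed contraction dynamics with vanishing (i.p.) disturbances: the iterates
converge to the fixed point with increasing permanence. -/
theorem contraction_vanishing_disturbance_convIP {X : Type*} [NormedAddCommGroup X]
    [NormedSpace ℝ X]
    (φ : X → X) (lam : ℝ) (hlam0 : 0 ≤ lam) (hlam1 : lam < 1)
    (hlip : ∀ a b : X, ‖φ a - φ b‖ ≤ lam * ‖a - b‖)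
    (xstar : X) (hfix : φ xstar = xstar)
    (y d : ℕ → X) (hrec : ∀ t : ℕ, y (t + 1) = φ (y t) + d t)
    (b : ℝ) (hb : ∀ t, ‖d t‖ ≤ b)
    (hd : ConvIP (fun t => ‖d t‖) 0) :
    ConvIP y xstar := by
  have hdist (t : ℕ) : dist (y (t + 1)) (φ (y t)) = ‖d t‖ := by rw [hrec, dist_self_add_left]
  exact contraction_vanishing_disturbance_convIP_general hlam0 hlam1
    (fun a => by simpa only [dist_eq_norm, hfix] using hlip a xstar)
    (by simpa only [hdist] using hb) (by simpa only [hdist] using hd)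
end

section
/- Consider online-learning-based model-reference adaptive control with first-order Euler-discretised error dynamics e_{t+1} = M e_t + d_t, where M is a square real matrix with σ := ∑_{i=0}^∞ ‖M^i‖ < ∞ and d_t ∈ ℝ^n is the prediction error at time t. Suppose: (i) the disturbances are bounded, i.e. ∃ b ∀ t: ‖d_t‖ ≤ b; and (ii) the stage losses ℓ_t := ‖d_t‖₂² are non-negative and there exists a parameter achieving zero loss at every stage, and the parameter updates incur sublinear external regret so that (1/T) ∑_{t=1}^T ‖d_t‖₂² → 0 as T → ∞. Then the tracking error trajectory vanishes with increasing permanence: e_t ⇝ 0 (i.e. ‖e_t‖ ⇝ 0). -/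
/-!
Since `σ = ∑ ‖Mⁱ‖ < ∞`, the error is the convolution of the disturbances with an `ℓ¹` kernel, so
the sum of `‖e t‖` over `t ≤ T` is at most `σ (‖e 0‖ + ∑ ‖d t‖)`, the last sum being over `t < T`.
By the power mean inequality the averages of `‖d t‖` tend to zero, hence so do those of `‖e t‖`.
Finally, if the averages of a nonnegative sequence tend to zero, then so do the averages of its
sums over sliding windows of a fixed length; hence there are arbitrarily late windows with small
sum, and all entries of such a window are small.
-/

open Filter Finset Asymptotics
open scoped Topology

theorem isLittleO_const_natCast_atTop (c : ℝ) :
    (fun _ : ℕ => c) =o[atTop] fun T : ℕ => (T : ℝ) :=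
  (isLittleO_const_id_atTop c).natCast_atTop

/-- The averages of the first `T` terms of `a` tend to zero as `T → ∞`, phrased as
`∑ t < T, a t = o(T)` so that no division by `T = 0` occurs. -/
def MeanVanishes (a : ℕ → ℝ) : Prop :=
  (fun T : ℕ => ∑ t ∈ range T, a t) =o[atTop] fun T : ℕ => (T : ℝ)

theorem meanVanishes_succ_iff_tendsto {a : ℕ → ℝ} :
    MeanVanishes (fun t => a (t + 1)) ↔
      Tendsto (fun T : ℕ => (1 / (T : ℝ)) * ∑ t ∈ Icc 1 T, a t) atTop (𝓝 0) := by
  have sum_shift (T : ℕ) : ∑ t ∈ range T, a (t + 1) = ∑ t ∈ Icc 1 T, a t := by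
    rw [range_eq_Ico, sum_Ico_add', zero_add, Ico_add_one_right_eq_Icc]
  have sum_shift_eq_zero (T : ℕ) (hT : (T : ℝ) = 0) : ∑ t ∈ range T, a (t + 1) = 0 := by
    rw [Nat.cast_eq_zero.mp hT, sum_range_zero]
  rw [MeanVanishes, isLittleO_iff_tendsto sum_shift_eq_zero]
  simp only [sum_shift, div_eq_inv_mul, mul_one]

namespace MeanVanishes

variable {a : ℕ → ℝ}

theorem of_pow {p : ℕ} (hp : p ≠ 0) (ha : ∀ t, 0 ≤ a t) (h : MeanVanishes fun t => a t ^ p) :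
    MeanVanishes a := by
  obtain ⟨q, rfl⟩ := Nat.exists_eq_succ_of_ne_zero hp
  have power_mean : ∀ᶠ T : ℕ in atTop,
      ‖(∑ t ∈ range T, a t) ^ (q + 1)‖ ≤ ‖(T : ℝ) ^ q * ∑ t ∈ range T, a t ^ (q + 1)‖ := by
    filter_upwards [eventually_gt_atTop 0] with T hT
    have sum_nonneg : 0 ≤ ∑ t ∈ range T, a t := Finset.sum_nonneg fun t _ => ha t
    rw [Real.norm_of_nonneg (by positivity)]
    refine le_trans ?_ (Real.le_norm_self _)
    rw [← div_le_iff₀' (by positivity)]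
    simpa only [card_range] using pow_sum_div_card_le_sum_pow (s := range T) (fun t _ => ha t) q
  have pow_isLittleO : (fun T : ℕ => (∑ t ∈ range T, a t) ^ (q + 1)) =o[atTop]
      fun T : ℕ => (T : ℝ) ^ (q + 1) := by
    simp only [pow_succ (Nat.cast _ : ℝ) q]
    exact (IsBigO.of_bound' power_mean).trans_isLittleO ((isBigO_refl _ _).mul_isLittleO h)
  exact IsLittleO.of_pow pow_isLittleO hp

theorem comp_add_right (h : MeanVanishes a) (k : ℕ) : MeanVanishes fun t => a (t + k) := by
  have sum_shift (T : ℕ) :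
      ∑ t ∈ range T, a (t + k) = ∑ t ∈ range (k + T), a t - ∑ t ∈ range k, a t := by
    rw [sum_range_add_sub_sum_range]
    simp only [add_comm k]
  have cast_isBigO : (fun T : ℕ => ((k + T : ℕ) : ℝ)) =O[atTop] fun T : ℕ => (T : ℝ) := by
    simp only [Nat.cast_add]
    exact (isLittleO_const_natCast_atTop k).isBigO.add (isBigO_refl _ _)
  have add_tendsto : Tendsto (fun T => k + T) atTop atTop :=
    tendsto_atTop_mono (Nat.le_add_left · k) tendsto_id
  have longer_sum_isLittleO := (h.comp_tendsto add_tendsto).trans_isBigO cast_isBigO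
  simp only [MeanVanishes, sum_shift]
  exact longer_sum_isLittleO.sub (isLittleO_const_natCast_atTop _)

theorem sum_window (h : MeanVanishes a) (D : ℕ) :
    MeanVanishes fun t => ∑ i ∈ range D, a (t + i) := by
  simp only [MeanVanishes, sum_comm (t := range D)]
  exact IsLittleO.fun_sum fun i _ => h.comp_add_right i

theorem frequently_le (h : MeanVanishes a) {ε : ℝ} (hε : 0 < ε) : ∃ᶠ t in atTop, a t ≤ ε := by
  intro eventually_not_le
  obtain ⟨N, hN⟩ := eventually_atTop.mp eventually_not_le
  have sum_ge (T : ℕ) : T * ε ≤ ∑ t ∈ range T, a (t + N) := by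
    simpa only [card_range, nsmul_eq_mul] using
      card_nsmul_le_sum (range T) _ ε fun t _ => (not_le.mp (hN (t + N) (Nat.le_add_left N t))).le
  obtain ⟨T, sum_le, T_pos⟩ :=
    (((h.comp_add_right N).def (half_pos hε)).and (eventually_gt_atTop 0)).exists
  have T_cast_pos : (0 : ℝ) < T := Nat.cast_pos.mpr T_pos
  have : T * ε ≤ ε / 2 * T := calc
    T * ε ≤ ∑ t ∈ range T, a (t + N) := sum_ge T
    _ ≤ ‖∑ t ∈ range T, a (t + N)‖ := Real.le_norm_self _
    _ ≤ ε / 2 * T := by rwa [Real.norm_of_nonneg T_cast_pos.le] at sum_le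
  linarith [mul_pos T_cast_pos hε]

theorem frequently_forall_lt_le (h : MeanVanishes a) (ha : ∀ t, 0 ≤ a t) {ε : ℝ} (hε : 0 < ε)
    (D : ℕ) : ∃ᶠ t in atTop, ∀ i < D, a (t + i) ≤ ε :=
  ((h.sum_window D).frequently_le hε).mono fun t ht _ hi =>
    (single_le_sum (f := fun i => a (t + i)) (fun j _ => ha (t + j)) (mem_range.mpr hi)).trans ht

end MeanVanishes

theorem convIP_zero_of_meanVanishes_norm_succ {E : Type*} [SeminormedAddCommGroup E] {s : ℕ → E}
    (h : MeanVanishes fun t => ‖s (t + 1)‖) : ConvIP s 0 := by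
  intro ε hε D N
  obtain ⟨n, hNn, hn⟩ :=
    frequently_atTop.mp (h.frequently_forall_lt_le (fun _ => norm_nonneg _) hε D) N
  refine ⟨n, hNn, fun i one_le_i i_le_D => ?_⟩
  obtain ⟨j, rfl⟩ := Nat.exists_eq_add_of_le' one_le_i
  simpa only [dist_zero_left, ← add_assoc] using hn j i_le_D

theorem sum_range_convolution_le {c g : ℕ → ℝ} (hc : ∀ i, 0 ≤ c i) (hc_sum : Summable c)
    (hg : ∀ k, 0 ≤ g k) (T : ℕ) :
    ∑ t ∈ range T, ∑ k ∈ range (t + 1), g k * c (t - k) ≤ (∑' i, c i) * ∑ k ∈ range T, g k := by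
  rw [sum_range_diag_flip T fun k i => g k * c i, mul_comm, sum_mul]
  simp only [← mul_sum]
  gcongr with k
  · exact hg k
  · exact hc_sum.sum_le_tsum _ fun i _ => hc i

section LinearRecurrence

variable {𝕜 E : Type*} [NontriviallyNormedField 𝕜] [SeminormedAddCommGroup E] [NormedSpace 𝕜 E]
  {M : E →L[𝕜] E} {e d : ℕ → E}

theorem linearRecurrence_eq (hrec : ∀ t, e (t + 1) = M (e t) + d t) (t : ℕ) :
    e t = (M ^ t) (e 0) + ∑ k ∈ range t, (M ^ (t - 1 - k)) (d k) := by
  induction t with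
  | zero => simp
  | succ t ih =>
    have apply_pow {k : ℕ} (hk : k ∈ range t) :
        M ((M ^ (t - 1 - k)) (d k)) = (M ^ (t - k)) (d k) := by
      have exponent_eq : t - k = t - 1 - k + 1 := by
        have := mem_range.mp hk
        omega
      rw [exponent_eq, pow_succ', mul_apply_eq_comp]
    calc e (t + 1)
      _ = M (e t) + d t := hrec t
      _ = (M ^ (t + 1)) (e 0) + ∑ k ∈ range t, (M ^ (t - k)) (d k) + d t := by
        nth_rw 1 [ih]
        rw [map_add, map_sum, sum_congr rfl fun _ => apply_pow, pow_succ', mul_apply_eq_comp]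
      _ = (M ^ (t + 1)) (e 0) + ∑ k ∈ range (t + 1), (M ^ (t + 1 - 1 - k)) (d k) := by
        simp [sum_range_succ, add_assoc]

theorem norm_linearRecurrence_le (hrec : ∀ t, e (t + 1) = M (e t) + d t) (t : ℕ) :
    ‖e t‖ ≤ ‖M ^ t‖ * ‖e 0‖ + ∑ k ∈ range t, ‖d k‖ * ‖M ^ (t - 1 - k)‖ := by
  rw [linearRecurrence_eq hrec t]
  refine norm_add_le_of_le ((M ^ t).le_opNorm _) (norm_sum_le_of_le _ fun k _ => ?_)
  exact ((M ^ (t - 1 - k)).le_opNorm _).trans_eq (mul_comm _ _)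

theorem sum_norm_linearRecurrence_le (hM : Summable fun i => ‖M ^ i‖)
    (hrec : ∀ t, e (t + 1) = M (e t) + d t) (T : ℕ) :
    ∑ t ∈ range (T + 1), ‖e t‖ ≤ (∑' i, ‖M ^ i‖) * (‖e 0‖ + ∑ t ∈ range T, ‖d t‖) :=
  calc ∑ t ∈ range (T + 1), ‖e t‖
    _ ≤ ∑ t ∈ range (T + 1),
        (‖M ^ t‖ * ‖e 0‖ + ∑ k ∈ range t, ‖d k‖ * ‖M ^ (t - 1 - k)‖) :=
      sum_le_sum fun t _ => norm_linearRecurrence_le hrec t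
    _ = (∑ t ∈ range (T + 1), ‖M ^ t‖) * ‖e 0‖
        + ∑ t ∈ range T, ∑ k ∈ range (t + 1), ‖d k‖ * ‖M ^ (t - k)‖ := by
      rw [sum_add_distrib, sum_mul, sum_range_succ' (fun t => ∑ k ∈ range t, _)]
      simp only [Nat.add_sub_cancel, sum_range_zero, add_zero]
    _ ≤ (∑' i, ‖M ^ i‖) * ‖e 0‖ + (∑' i, ‖M ^ i‖) * ∑ t ∈ range T, ‖d t‖ := by
      gcongr
      · exact hM.sum_le_tsum _ fun i _ => norm_nonneg _
      · exact sum_range_convolution_le (fun _ => norm_nonneg _) hM (fun _ => norm_nonneg _) T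
    _ = (∑' i, ‖M ^ i‖) * (‖e 0‖ + ∑ t ∈ range T, ‖d t‖) := (mul_add _ _ _).symm

theorem MeanVanishes.norm_linearRecurrence (hd : MeanVanishes fun t => ‖d t‖)
    (hM : Summable fun i => ‖M ^ i‖) (hrec : ∀ t, e (t + 1) = M (e t) + d t) :
    MeanVanishes fun t => ‖e t‖ := by
  have bound_isLittleO :
      (fun T : ℕ => (∑' i, ‖M ^ i‖) * (‖e 0‖ + ∑ t ∈ range T, ‖d t‖)) =o[atTop]
        fun T : ℕ => (T : ℝ) :=
    ((isLittleO_const_natCast_atTop ‖e 0‖).add hd).const_mul_left _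
  refine (IsBigO.of_norm_le fun T => ?_).trans_isLittleO bound_isLittleO
  calc ‖∑ t ∈ range T, ‖e t‖‖
    _ = ∑ t ∈ range T, ‖e t‖ := Real.norm_of_nonneg (sum_nonneg fun t _ => norm_nonneg _)
    _ ≤ ∑ t ∈ range (T + 1), ‖e t‖ := by
      rw [sum_range_succ]
      exact le_add_of_nonneg_right (norm_nonneg _)
    _ ≤ (∑' i, ‖M ^ i‖) * (‖e 0‖ + ∑ t ∈ range T, ‖d t‖) :=
      sum_norm_linearRecurrence_le hM hrec T

theorem tracking_error_convIP_general {p : ℕ} (hp : p ≠ 0) (hM : Summable fun i => ‖M ^ i‖)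
    (hrec : ∀ t, e (t + 1) = M (e t) + d t)
    (hcesaro : Tendsto (fun T : ℕ => (1 / (T : ℝ)) * ∑ t ∈ Icc 1 T, ‖d t‖ ^ p) atTop (𝓝 0)) :
    ConvIP e 0 := by
  have mean_pow_d : MeanVanishes fun t => ‖d (t + 1)‖ ^ p :=
    meanVanishes_succ_iff_tendsto.mpr hcesaro
  have mean_d : MeanVanishes fun t => ‖d (t + 1)‖ := mean_pow_d.of_pow hp fun _ => norm_nonneg _
  have mean_e : MeanVanishes fun t => ‖e (t + 1)‖ :=
    mean_d.norm_linearRecurrence hM fun t => hrec (t + 1)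
  exact convIP_zero_of_meanVanishes_norm_succ mean_e

end LinearRecurrence

/-- No-regret learning-based model-reference adaptive control: for the discretised error
dynamics `e_{t+1} = M e_t + d_t` with `σ = ∑ ‖Mⁱ‖ < ∞`, bounded prediction errors `d_t`,
and Cesàro-vanishing squared prediction losses `‖d_t‖²` (as guaranteed by a sublinear-regret
learner with a realisable target), the tracking error vanishes with increasing permanence. -/
theorem tracking_error_convIP {n : ℕ}
    (M : EuclideanSpace ℝ (Fin n) →L[ℝ] EuclideanSpace ℝ (Fin n))
    (hsum : Summable fun i : ℕ => ‖M ^ i‖)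
    (e d : ℕ → EuclideanSpace ℝ (Fin n))
    (hrec : ∀ t : ℕ, e (t + 1) = M (e t) + d t)
    (b : ℝ) (hb : ∀ t, ‖d t‖ ≤ b)
    (hcesaro : Filter.Tendsto (fun T : ℕ => (1 / (T : ℝ)) * ∑ t ∈ Finset.Icc 1 T, ‖d t‖ ^ 2)
      Filter.atTop (nhds 0)) :
    ConvIP e 0 := by
  exact tracking_error_convIP_general two_ne_zero hsum hrec hcesaro
end
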